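/- The G-invariant 2-forms, i.e., the elements f₁y₂y₃ + f₂y₃y₁ + f₃y₁y₂ of R (fₛ ∈ S) fixed by every g ∈ G, form a free A-module with basis {d₁, d₂, d₃, d₄, d₅, d₆}: every such G-invariant 2-form is uniquely an A-linear combination of d₁,…,d₆. -/

import Mathlib

open Matrix MvPolynomial

set_option synthInstance.maxHeartbeats 1000000
set_option maxHeartbeats 1000000

abbrev F3 : Type := ZMod 3
abbrev G3 : Type := Matrix.SpecialLinearGroup (Fin 2) F3
abbrev S3 : Type := MvPolynomial (Fin 3) F3

/-- The fixed basis `v₁, v₂, v₃` of the traceless `2 × 2` matrices over `𝔽₃`. -/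
def V : Fin 3 → Matrix (Fin 2) (Fin 2) F3 :=
  ![!![0, 1; -1, 0], !![-1, -1; -1, 1], !![1, -1; -1, -1]]

/-- Coordinates of a traceless matrix with respect to the basis `v₁, v₂, v₃`. -/
def coordM : Fin 3 → Matrix (Fin 2) (Fin 2) F3 → F3 :=
  ![fun X => X 1 0 - X 0 1, fun X => X 0 0 - X 0 1 - X 1 0, fun X => -(X 0 0 + X 0 1 + X 1 0)]

/-- Matrix of the (dual) action of `g` on `M*`: `g • x_s = ∑ r, (rep g) s r • x_r`, where
`(rep g) s r = x_s (g⁻¹ • v_r) = coordM s (g⁻¹ vᵣ g)`, coming from `(g • f)(v) = f(g⁻¹ • v)`. -/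
def rep (g : G3) : Matrix (Fin 3) (Fin 3) F3 :=
  Matrix.of fun s r => coordM s ((g⁻¹ : G3) * V r * (g : Matrix (Fin 2) (Fin 2) F3))

/-- The action of `g ∈ SL₂(𝔽₃)` on `S = 𝔽₃[x₁,x₂,x₃]` by algebra automorphisms, given by
substituting `x_s ↦ g • x_s = ∑ r, (rep g) s r • x_r`. -/
noncomputable def actS (g : G3) : S3 →ₐ[F3] S3 :=
  MvPolynomial.aeval fun s => ∑ r : Fin 3, rep g s r • MvPolynomial.X r

noncomputable def a1 : S3 := X 0 ^ 2 + X 1 ^ 2 + X 2 ^ 2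
noncomputable def a2 : S3 := X 0 * X 1 * X 2
noncomputable def a3 : S3 := X 0 ^ 4 + X 1 ^ 4 + X 2 ^ 4
noncomputable def bP : S3 := X 0 ^ 4 * X 1 ^ 2 + X 0 ^ 2 * X 2 ^ 4 + X 1 ^ 4 * X 2 ^ 2
noncomputable def av : Fin 3 → S3 := ![a1, a2, a3]

def tm : G3 := ⟨!![1, 1; 0, 1], by decide⟩
def im : G3 := ⟨!![0, 1; -1, 0], by decide⟩
def jm : G3 := ⟨!![1, -1; -1, -1], by decide⟩

/-- The quaternion subgroup `H = ⟨i, j⟩ ≅ Q₈` of `SL₂(𝔽₃)`. -/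
def H3 : Subgroup G3 := Subgroup.closure {im, jm}

/-- The character with `χ(±e) = χ(±i) = 1` and `χ(±j) = χ(±k) = -1` (its values off the
set `{±e, ±i}` are `-1`; only the restriction to `H` is ever used). -/
def chi (g : G3) : F3 :=
  if (g : Matrix (Fin 2) (Fin 2) F3) = 1 ∨ (g : Matrix (Fin 2) (Fin 2) F3) = -1 ∨
     (g : Matrix (Fin 2) (Fin 2) F3) = (im : Matrix (Fin 2) (Fin 2) F3) ∨
     (g : Matrix (Fin 2) (Fin 2) F3) = -(im : Matrix (Fin 2) (Fin 2) F3) then 1 else -1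

/-- The `𝔽₃`-submodule `S^H_χ` of `χ`-relative `H`-invariants in `S`. -/
noncomputable def relInv : Submodule F3 S3 where
  carrier := {f | ∀ h ∈ H3, actS h f = chi h • f}
  add_mem' := by
    intro f g hf hg h hh
    rw [map_add, hf h hh, hg h hh, smul_add]
  zero_mem' := by
    intro h hh
    rw [map_zero, smul_zero]
  smul_mem' := by
    intro c f hf h hh
    rw [_root_.map_smul, hf h hh, smul_comm]

open TensorProduct

/-- The exterior algebra `Λ(M*)` on `y₁, y₂, y₃` (with `M*` in dual-basis coordinates). -/
abbrev Lam : Type := ExteriorAlgebra F3 (Fin 3 → F3)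

/-- `y_s = dx_s`, the exterior generators. -/
noncomputable def yy (s : Fin 3) : Lam := ExteriorAlgebra.ι F3 (Pi.single s 1)

/-- The linear action of `g` on the coordinate space of `y₁, y₂, y₃`:
`y_s ↦ ∑ r, (rep g) s r • y_r`. -/
noncomputable def repL (g : G3) : (Fin 3 → F3) →ₗ[F3] (Fin 3 → F3) :=
  Matrix.toLin' (rep g)ᵀ

/-- The algebra of differential forms `R = S ⊗ Λ(M*)`: the graded-commutative `𝔽₃`-algebra
generated by the central `x₁, x₂, x₃` and the anticommuting `y₁, y₂, y₃`. -/
abbrev Rf : Type := S3 ⊗[F3] Lam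

/-- The action of `g ∈ SL₂(𝔽₃)` on `R` by ring automorphisms, acting on `x`'s as on `S`
and on `y₁, y₂, y₃` by the same matrices as on `x₁, x₂, x₃`. -/
noncomputable def actR (g : G3) : Rf →ₐ[F3] Rf :=
  Algebra.TensorProduct.map (actS g) (ExteriorAlgebra.map (repL g))

noncomputable def c1 : Rf := X 0 ⊗ₜ[F3] yy 0 + X 1 ⊗ₜ[F3] yy 1 + X 2 ⊗ₜ[F3] yy 2
noncomputable def c2 : Rf :=
  (X 1 * X 2) ⊗ₜ[F3] yy 0 + (X 2 * X 0) ⊗ₜ[F3] yy 1 + (X 0 * X 1) ⊗ₜ[F3] yy 2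
noncomputable def c3 : Rf :=
  (X 0 ^ 3) ⊗ₜ[F3] yy 0 + (X 1 ^ 3) ⊗ₜ[F3] yy 1 + (X 2 ^ 3) ⊗ₜ[F3] yy 2
noncomputable def c4 : Rf :=
  (X 0 * X 1 ^ 2) ⊗ₜ[F3] yy 0 + (X 1 * X 2 ^ 2) ⊗ₜ[F3] yy 1 + (X 2 * X 0 ^ 2) ⊗ₜ[F3] yy 2
noncomputable def c5 : Rf :=
  (X 1 ^ 3 * X 2) ⊗ₜ[F3] yy 0 + (X 2 ^ 3 * X 0) ⊗ₜ[F3] yy 1 + (X 0 ^ 3 * X 1) ⊗ₜ[F3] yy 2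
noncomputable def c6 : Rf :=
  (X 0 ^ 3 * X 1 ^ 2) ⊗ₜ[F3] yy 0 + (X 1 ^ 3 * X 2 ^ 2) ⊗ₜ[F3] yy 1 +
    (X 2 ^ 3 * X 0 ^ 2) ⊗ₜ[F3] yy 2

noncomputable def d1 : Rf :=
  X 0 ⊗ₜ[F3] (yy 1 * yy 2) + X 1 ⊗ₜ[F3] (yy 2 * yy 0) + X 2 ⊗ₜ[F3] (yy 0 * yy 1)
noncomputable def d2 : Rf :=
  (X 1 * X 2) ⊗ₜ[F3] (yy 1 * yy 2) + (X 2 * X 0) ⊗ₜ[F3] (yy 2 * yy 0) +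
    (X 0 * X 1) ⊗ₜ[F3] (yy 0 * yy 1)
noncomputable def d3 : Rf :=
  (X 0 ^ 3) ⊗ₜ[F3] (yy 1 * yy 2) + (X 1 ^ 3) ⊗ₜ[F3] (yy 2 * yy 0) +
    (X 2 ^ 3) ⊗ₜ[F3] (yy 0 * yy 1)
noncomputable def d4 : Rf :=
  (X 0 * X 1 ^ 2) ⊗ₜ[F3] (yy 1 * yy 2) + (X 1 * X 2 ^ 2) ⊗ₜ[F3] (yy 2 * yy 0) +
    (X 2 * X 0 ^ 2) ⊗ₜ[F3] (yy 0 * yy 1)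
noncomputable def d5 : Rf :=
  (X 1 ^ 3 * X 2) ⊗ₜ[F3] (yy 1 * yy 2) + (X 2 ^ 3 * X 0) ⊗ₜ[F3] (yy 2 * yy 0) +
    (X 0 ^ 3 * X 1) ⊗ₜ[F3] (yy 0 * yy 1)
noncomputable def d6 : Rf :=
  (X 0 ^ 3 * X 1 ^ 2) ⊗ₜ[F3] (yy 1 * yy 2) + (X 1 ^ 3 * X 2 ^ 2) ⊗ₜ[F3] (yy 2 * yy 0) +
    (X 2 ^ 3 * X 0 ^ 2) ⊗ₜ[F3] (yy 0 * yy 1)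

/-- The top form `y₁y₂y₃`. -/
noncomputable def y123 : Lam := yy 0 * yy 1 * yy 2

noncomputable def dvec : Fin 6 → Rf := ![d1, d2, d3, d4, d5, d6]

/-- The set of `2`-forms `f₁y₂y₃ + f₂y₃y₁ + f₃y₁y₂` with `fₛ ∈ S`. -/
def twoForms : Set Rf :=
  {z | ∃ f₁ f₂ f₃ : S3, z = f₁ ⊗ₜ[F3] (yy 1 * yy 2) + f₂ ⊗ₜ[F3] (yy 2 * yy 0) +
    f₃ ⊗ₜ[F3] (yy 0 * yy 1)}

/-- `Φ(p₁,…,p₆) = ∑ᵢ pᵢ(a₁,a₂,a₃)·dᵢ`. -/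
noncomputable def Phi11 (p : Fin 6 → MvPolynomial (Fin 3) F3) : Rf :=
  ∑ i : Fin 6, (aeval av (p i) ⊗ₜ[F3] (1 : Lam)) * dvec i

/-- `g` acts on the coordinates by `x_s ↦ ε_s x_{s+k}`, with signs `ε_s` of product `1`. -/
structure IsSignedShift (g : G3) (k : Fin 3) (ε : Fin 3 → F3) : Prop where
  prod_eq : ε 0 * ε 1 * ε 2 = 1
  mul_self : ∀ s, ε s * ε s = 1
  rep_eq : ∀ s, rep g s = Pi.single (s + k) (ε s)

theorem rep_eq_single {g : G3} {k : Fin 3} {ε : Fin 3 → F3}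
    (h : ∀ s r, coordM s ((g⁻¹ : G3) * V r * (g : Matrix (Fin 2) (Fin 2) F3)) =
      if r = s + k then ε s else 0) (s : Fin 3) :
    rep g s = Pi.single (s + k) (ε s) :=
  funext fun r => by rw [Pi.single_apply, ← h, rep, Matrix.of_apply]

theorem exists_isSignedShift (g : G3) : ∃ k ε, IsSignedShift g k ε := by
  have key : ∀ a b c d : F3, a * d - b * c = 1 → ∃ (k : Fin 3) (ε₀ ε₁ ε₂ : F3),
      ε₀ * ε₁ * ε₂ = 1 ∧ (∀ s, ![ε₀, ε₁, ε₂] s * ![ε₀, ε₁, ε₂] s = 1) ∧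
      ∀ s r, coordM s (!![d, -b; -c, a] * V r * !![a, b; c, d]) =
        if r = s + k then ![ε₀, ε₁, ε₂] s else 0 := by
    decide +kernel
  have hg := g.det_coe
  rw [Matrix.det_fin_two] at hg
  obtain ⟨k, ε₀, ε₁, ε₂, h1, h2, h3⟩ := key _ _ _ _ hg
  refine ⟨k, ![ε₀, ε₁, ε₂], h1, h2, rep_eq_single fun s r => ?_⟩
  have hinv : ((g⁻¹ : G3) : Matrix (Fin 2) (Fin 2) F3) = !![g 1 1, -g 0 1; -g 1 0, g 0 0] := by
    rw [Matrix.SpecialLinearGroup.coe_inv, Matrix.adjugate_fin_two]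
  rw [← h3, hinv, ← Matrix.eta_fin_two]

theorem isSignedShift_tm : IsSignedShift tm 1 1 :=
  ⟨by decide, by decide, rep_eq_single (by decide +kernel)⟩

theorem isSignedShift_im : IsSignedShift im 0 ![1, -1, -1] :=
  ⟨by decide, by decide, rep_eq_single (by decide +kernel)⟩

theorem isSignedShift_jm : IsSignedShift jm 0 ![-1, -1, 1] :=
  ⟨by decide, by decide, rep_eq_single (by decide +kernel)⟩

/-- The `2`-form `y_{s+1} y_{s+2}`. -/
noncomputable def eta (s : Fin 3) : Lam := yy (s + 1) * yy (s + 2)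

/-- The `2`-form with coordinates `f` in the basis `y₂y₃, y₃y₁, y₁y₂`. -/
noncomputable def form (f : Fin 3 → S3) : Rf := ∑ s, f s ⊗ₜ[F3] eta s

theorem form_eq (f : Fin 3 → S3) : form f =
    f 0 ⊗ₜ[F3] (yy 1 * yy 2) + f 1 ⊗ₜ[F3] (yy 2 * yy 0) + f 2 ⊗ₜ[F3] (yy 0 * yy 1) := by
  rw [form, Fin.sum_univ_three]
  rfl

/-- The coefficient of `y_{s+1} y_{s+2}`, as a linear functional on the exterior algebra. -/
noncomputable def etaCoord (s : Fin 3) : Lam →ₗ[F3] F3 :=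
  ExteriorAlgebra.liftAlternating (Pi.single 2
    ((Matrix.detRowAlternating (n := Fin 2) (R := F3)).compLinearMap
      (LinearMap.funLeft F3 F3 ![s + 1, s + 2])))

theorem etaCoord_eta (s r : Fin 3) : etaCoord s (eta r) = if r = s then 1 else 0 := by
  have h : eta r = ExteriorAlgebra.ιMulti F3 2
      ![Pi.single (r + 1) (1 : F3), Pi.single (r + 2) (1 : F3)] := by
    simp [eta, yy, ExteriorAlgebra.ιMulti_apply]
  rw [h, etaCoord, ExteriorAlgebra.liftAlternating_apply_ιMulti, Pi.single_eq_same]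
  refine (Matrix.det_fin_two (Matrix.of _)).trans ?_
  change (Pi.single (r + 1) 1 : Fin 3 → F3) (s + 1) * (Pi.single (r + 2) 1 : Fin 3 → F3) (s + 2) -
    (Pi.single (r + 1) 1 : Fin 3 → F3) (s + 2) * (Pi.single (r + 2) 1 : Fin 3 → F3) (s + 1) = _
  simp only [Pi.single_apply]
  clear h
  revert s r
  decide

/-- The `S`-coefficient of `y_{s+1} y_{s+2}` of a differential form. -/
noncomputable def formCoord (s : Fin 3) : Rf →ₗ[F3] S3 :=
  (TensorProduct.rid F3 S3).toLinearMap ∘ₗ (etaCoord s).lTensor S3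

theorem formCoord_form (f : Fin 3 → S3) (s : Fin 3) : formCoord s (form f) = f s := by
  simp [formCoord, form, etaCoord_eta, ite_smul]

theorem form_injective : Function.Injective form := fun f g h =>
  funext fun s => by rw [← formCoord_form f, h, formCoord_form]

namespace IsSignedShift

variable {g : G3} {k : Fin 3} {ε : Fin 3 → F3}

theorem mul_eq (h : IsSignedShift g k ε) (s : Fin 3) : ε (s + 1) * ε (s + 2) = ε s := by
  have h0 : ε s * ε (s + 1) * ε (s + 2) = 1 := by
    rw [← h.prod_eq]
    fin_cases s
    · rfl
    · exact (mul_rotate _ _ _).symm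
    · exact mul_rotate _ _ _
  linear_combination ε s * h0 - ε (s + 1) * ε (s + 2) * h.mul_self s

theorem actS_X (h : IsSignedShift g k ε) (s : Fin 3) : actS g (X s) = C (ε s) * X (s + k) := by
  simp [actS, h.rep_eq, Pi.single_apply, ite_smul, smul_eq_C_mul]

theorem C_mul_self (h : IsSignedShift g k ε) (s : Fin 3) : (C (ε s) ^ 2 : S3) = 1 := by
  rw [sq, ← C_mul, h.mul_self, C_1]

theorem repL_single (h : IsSignedShift g k ε) (s : Fin 3) :
    repL g (Pi.single s 1) = ε s • Pi.single (s + k) 1 := by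
  rw [repL, Matrix.toLin'_apply, Matrix.mulVec_single_one, Matrix.col_transpose]
  ext r
  simp [Matrix.row, h.rep_eq, Pi.single_apply]

theorem map_repL_eta (h : IsSignedShift g k ε) (s : Fin 3) :
    ExteriorAlgebra.map (repL g) (eta s) = ε s • eta (s + k) := by
  simp only [eta, yy, map_mul, ExteriorAlgebra.map_apply_ι, h.repL_single, map_smul,
    smul_mul_smul_comm, h.mul_eq, add_right_comm _ _ k]

theorem actR_form (h : IsSignedShift g k ε) (f : Fin 3 → S3) :
    actR g (form f) = form fun s => ε (s - k) • actS g (f (s - k)) := by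
  rw [form, form, ← Equiv.sum_comp (Equiv.addRight k) fun s =>
    (ε (s - k) • actS g (f (s - k))) ⊗ₜ[F3] eta s]
  simp [actR, h.map_repL_eta, TensorProduct.smul_tmul']

theorem actR_form_eq_iff (h : IsSignedShift g k ε) (f : Fin 3 → S3) :
    actR g (form f) = form f ↔ ∀ s, actS g (f s) = ε s • f (s + k) := by
  rw [h.actR_form, form_injective.eq_iff, funext_iff, ← (Equiv.addRight k).forall_congr_right]
  refine forall_congr' fun s => ?_
  rw [Equiv.coe_addRight, add_sub_cancel_right]
  constructor <;> intro hs
  · rw [← hs, smul_smul, h.mul_self, one_smul]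
  · rw [hs, smul_smul, h.mul_self, one_smul]

theorem actS_av (h : IsSignedShift g k ε) (i : Fin 3) : actS g (av i) = av i := by
  have hp : (C (ε 0) * C (ε 1) * C (ε 2) : S3) = 1 := by rw [← C_mul, ← C_mul, h.prod_eq, C_1]
  have hq : ∀ s, (C (ε s) ^ 4 : S3) = 1 := fun s => by
    rw [pow_mul _ 2 2, h.C_mul_self, one_pow]
  fin_cases i
  · simp only [av, a1, Fin.zero_eta, Matrix.cons_val_zero, map_add, map_pow, h.actS_X, mul_pow,
      h.C_mul_self, one_mul]
    fin_cases k <;> simp <;> ring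
  · simp only [av, a2, Fin.mk_one, Matrix.cons_val_one, Matrix.cons_val_zero, map_mul, h.actS_X]
    fin_cases k <;> simp <;> linear_combination (X 0 * X 1 * X 2) * hp
  · simp only [av, a3, Fin.reduceFinMk, Matrix.cons_val, map_add, map_pow, h.actS_X, mul_pow,
      hq, one_mul]
    fin_cases k <;> simp <;> ring

end IsSignedShift

theorem actS_aeval_av (g : G3) (p : S3) : actS g (aeval av p) = aeval av p := by
  obtain ⟨k, ε, h⟩ := exists_isSignedShift g
  rw [← AlgHom.comp_apply, comp_aeval]
  simp only [h.actS_av]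

/-- The coordinates of the basis forms `d₁, …, d₆`. -/
noncomputable def dcoord (i : Fin 6) (s : Fin 3) : S3 :=
  ![X s, X (s + 1) * X (s + 2), X s ^ 3, X s * X (s + 1) ^ 2, X (s + 1) ^ 3 * X (s + 2),
    X s ^ 3 * X (s + 1) ^ 2] i

theorem dvec_eq_form (i : Fin 6) : dvec i = form (dcoord i) := by
  rw [form_eq]
  fin_cases i <;> rfl

theorem Phi11_eq_form (p : Fin 6 → S3) :
    Phi11 p = form fun s => ∑ i, aeval av (p i) * dcoord i s := by
  simp only [Phi11, dvec_eq_form, form, Finset.mul_sum, Algebra.TensorProduct.tmul_mul_tmul,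
    one_mul, TensorProduct.sum_tmul]
  exact Finset.sum_comm

theorem IsSignedShift.actS_dcoord {g : G3} {k : Fin 3} {ε : Fin 3 → F3}
    (h : IsSignedShift g k ε) (i : Fin 6) (s : Fin 3) :
    actS g (dcoord i s) = ε s • dcoord i (s + k) := by
  have hp : (C (ε (s + 1)) * C (ε (s + 2)) : S3) = C (ε s) := by rw [← C_mul, h.mul_eq]
  have h0 := h.C_mul_self s
  have h1 := h.C_mul_self (s + 1)
  have e1 := add_right_comm s k 1
  have e2 := add_right_comm s k 2
  rw [smul_eq_C_mul]
  fin_cases i <;> simp [dcoord, h.actS_X, e1, e2] <;> grind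

theorem actR_Phi11 (g : G3) (p : Fin 6 → S3) : actR g (Phi11 p) = Phi11 p := by
  obtain ⟨k, ε, h⟩ := exists_isSignedShift g
  rw [Phi11_eq_form, h.actR_form_eq_iff]
  intro s
  simp only [map_sum, map_mul, actS_aeval_av, h.actS_dcoord, Finset.smul_sum, mul_smul_comm]

theorem X_sq_cubic (s : Fin 3) :
    (X s ^ 2) ^ 3 - a1 * (X s ^ 2) ^ 2 + (a3 - a1 ^ 2) * X s ^ 2 - a2 ^ 2 = 0 := by
  have h3 : (3 : S3) = 0 := CharP.ofNat_eq_zero S3 3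
  simp only [a1, a2, a3]
  fin_cases s <;> simp only [Fin.zero_eta, Fin.mk_one, Fin.reduceFinMk] <;> grind

theorem algebraicIndependent_av : AlgebraicIndependent F3 av := by
  have hmem : ∀ i, av i ∈ Algebra.adjoin F3 (Set.range av) := fun i =>
    Algebra.subset_adjoin ⟨i, rfl⟩
  have hX : ∀ s : Fin 3, IsIntegral (Algebra.adjoin F3 (Set.range av)) (X s : S3) := by
    intro s
    refine IsIntegral.of_pow (n := 2) two_pos ?_
    let b (i : Fin 3) : Algebra.adjoin F3 (Set.range av) := ⟨av i, hmem i⟩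
    refine ⟨Polynomial.X ^ 3 + (- Polynomial.C (b 0) * Polynomial.X ^ 2 +
      Polynomial.C (b 2 - b 0 ^ 2) * Polynomial.X - Polynomial.C (b 1 ^ 2)), ?_, ?_⟩
    · monicity!
    · have h := X_sq_cubic s
      have hb : ∀ i, algebraMap _ S3 (b i) = av i := fun _ => rfl
      simp only [Polynomial.eval₂_add, Polynomial.eval₂_sub, Polynomial.eval₂_mul,
        Polynomial.eval₂_neg, Polynomial.eval₂_pow, Polynomial.eval₂_X, Polynomial.eval₂_C,
        map_sub, map_pow, hb]
      change (X s ^ 2) ^ 3 + (-a1 * (X s ^ 2) ^ 2 + (a3 - a1 ^ 2) * X s ^ 2 - a2 ^ 2) = 0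
      linear_combination h
  have : Algebra.IsAlgebraic (Algebra.adjoin F3 (Set.range av)) S3 := by
    have : Algebra.IsIntegral (Algebra.adjoin F3 (Set.range av)) S3 := ⟨fun p => by
      induction p using MvPolynomial.induction_on with
      | C a => exact isIntegral_algebraMap (x := algebraMap F3 _ a)
      | add p q hp hq => exact hp.add hq
      | mul_X p s hp => exact hp.mul (hX s)⟩
    infer_instance
  refine (Algebra.IsAlgebraic.isTranscendenceBasis_of_le_trdeg_of_finite F3 av ?_).1
  rw [MvPolynomial.trdeg_of_isDomain]
  simp

theorem av_isSymmetric (i : Fin 3) : (av i).IsSymmetric := by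
  fin_cases i
  · have h := psum_isSymmetric (Fin 3) F3 2
    rw [psum, Fin.sum_univ_three] at h
    exact h
  · intro e
    have h := Equiv.prod_comp e fun i => (X i : S3)
    simpa [Fin.prod_univ_three, av, a2] using h
  · have h := psum_isSymmetric (Fin 3) F3 4
    rw [psum, Fin.sum_univ_three] at h
    exact h

theorem aeval_av_isSymmetric (p : S3) : (aeval av p : S3).IsSymmetric := fun e => by
  rw [← AlgHom.comp_apply, comp_aeval]
  simp only [av_isSymmetric _ e]

theorem X_sq_sub_X_sq_ne_zero {s r : Fin 3} (h : s ≠ r) : (X s ^ 2 - X r ^ 2 : S3) ≠ 0 := by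
  intro h0
  simpa [h.symm] using congrArg (eval (Pi.single s (1 : F3))) h0

theorem eq_zero_of_isSymmetric {A B D : S3} (hA : A.IsSymmetric) (hB : B.IsSymmetric)
    (hD : D.IsSymmetric) (h : A * X 0 + B * (X 1 * X 2) + D * X 0 ^ 3 = 0) :
    A = 0 ∧ B = 0 ∧ D = 0 := by
  have h1 := congrArg (rename (Equiv.swap (0 : Fin 3) 1)) h
  have h2 := congrArg (rename (Equiv.swap (0 : Fin 3) 2)) h
  have e1 : Equiv.swap (0 : Fin 3) 1 2 = 2 := by decide
  have e2 : Equiv.swap (0 : Fin 3) 2 1 = 1 := by decide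
  simp only [map_add, map_mul, map_pow, rename_X, hA _, hB _, hD _, map_zero,
    Equiv.swap_apply_left, Equiv.swap_apply_right, e1, e2] at h1 h2
  have h01 : A + D * (X 0 ^ 2 + X 1 ^ 2) = 0 :=
    (mul_eq_zero.1 (by linear_combination X 0 * h - X 1 * h1)).resolve_left
      (X_sq_sub_X_sq_ne_zero (s := 0) (r := 1) (by decide))
  have h02 : A + D * (X 0 ^ 2 + X 2 ^ 2) = 0 :=
    (mul_eq_zero.1 (by linear_combination X 0 * h - X 2 * h2)).resolve_left
      (X_sq_sub_X_sq_ne_zero (s := 0) (r := 2) (by decide))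
  have hD0 : D = 0 :=
    (mul_eq_zero.1 (by linear_combination h01 - h02)).resolve_left
      (X_sq_sub_X_sq_ne_zero (s := 1) (r := 2) (by decide))
  have hA0 : A = 0 := by simpa [hD0] using h01
  refine ⟨hA0, ?_, hD0⟩
  simpa [hA0, hD0] using h

theorem linearIndependent_dcoord {c : Fin 6 → S3} (h : ∑ i, aeval av (c i) * dcoord i 0 = 0) :
    c = 0 := by
  have hs := fun i => aeval_av_isSymmetric (c i)
  simp only [Fin.sum_univ_six, dcoord, zero_add, Matrix.cons_val] at h
  have h' := congrArg (rename (Equiv.swap (1 : Fin 3) 2)) h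
  have e0 : Equiv.swap (1 : Fin 3) 2 0 = 0 := by decide
  simp only [map_add, map_mul, map_pow, rename_X, hs _ _, map_zero, Equiv.swap_apply_left,
    Equiv.swap_apply_right, e0] at h'
  have h₁ : aeval av (c 3) * X 0 + aeval av (c 4) * (X 1 * X 2) + aeval av (c 5) * X 0 ^ 3 = 0 :=
    (mul_eq_zero.1 (by linear_combination h - h')).resolve_left
      (X_sq_sub_X_sq_ne_zero (s := 1) (r := 2) (by decide))
  have h₂ : aeval av (c 0) * X 0 + aeval av (c 1) * (X 1 * X 2) + aeval av (c 2) * X 0 ^ 3 = 0 := by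
    linear_combination h - X 1 ^ 2 * h₁
  obtain ⟨h3, h4, h5⟩ := eq_zero_of_isSymmetric (hs 3) (hs 4) (hs 5) h₁
  obtain ⟨h0, h1, h2⟩ := eq_zero_of_isSymmetric (hs 0) (hs 1) (hs 2) h₂
  refine funext fun i => (injective_iff_map_eq_zero _).1 algebraicIndependent_av (c i) ?_
  fin_cases i
  exacts [h0, h1, h2, h3, h4, h5]

/-- The span of the first coordinates of `d₁, …, d₆` over the invariant ring `A`. -/
noncomputable def dspan : Submodule (aeval (R := F3) av).range S3 :=
  Submodule.span _ (Set.range fun i => dcoord i 0)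

theorem mem_dspan_iff {f : S3} :
    f ∈ dspan ↔ ∃ p : Fin 6 → S3, ∑ i, aeval av (p i) * dcoord i 0 = f := by
  rw [dspan, Submodule.mem_span_range_iff_exists_fun]
  constructor
  · rintro ⟨c, hc⟩
    choose p hp using fun i => (c i).2
    refine ⟨p, Eq.trans (Finset.sum_congr rfl fun i _ => ?_) hc⟩
    exact congrArg (· * dcoord i 0) (hp i)
  · rintro ⟨p, hp⟩
    exact ⟨fun i => ⟨_, p i, rfl⟩, hp⟩

theorem dcoord_mem_dspan (i : Fin 6) : dcoord i 0 ∈ dspan := Submodule.subset_span ⟨i, rfl⟩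

theorem aeval_mul_mem_dspan (p : S3) {f : S3} (hf : f ∈ dspan) : aeval av p * f ∈ dspan :=
  dspan.smul_mem ⟨_, p, rfl⟩ hf

theorem X_sq_mul_mem_dspan (s : Fin 3) {f : S3} (hf : f ∈ dspan) : X s ^ 2 * f ∈ dspan := by
  have hstep : ∀ {t : S3}, (∀ i, t * dcoord i 0 ∈ dspan) → ∀ {f}, f ∈ dspan → t * f ∈ dspan := by
    intro t ht f hf
    induction hf using Submodule.span_induction with
    | mem x hx => obtain ⟨i, rfl⟩ := hx; exact ht i
    | zero => rw [mul_zero]; exact zero_mem _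
    | add x y _ _ hx hy => rw [mul_add]; exact add_mem hx hy
    | smul a x _ hx => rw [mul_smul_comm]; exact dspan.smul_mem a hx
  have h3 : (3 : S3) = 0 := CharP.ofNat_eq_zero S3 3
  have h0 : ∀ {f}, f ∈ dspan → X 0 ^ 2 * f ∈ dspan := hstep fun i => mem_dspan_iff.2
    ⟨!![0, 0, 1, 0, 0, 0;
        X 1, 0, 0, 0, 0, 0;
        X 0 ^ 2 - X 2, X 1, X 0, 0, 0, 0;
        0, 0, 0, 0, 0, 1;
        0, 0, 0, X 1, 0, 0;
        0, 0, 0, X 0 ^ 2 - X 2, X 1, X 0] i, by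
      fin_cases i <;> simp [Fin.sum_univ_six, dcoord, av, a1, a2, a3] <;> grind⟩
  have h1 : ∀ {f}, f ∈ dspan → X 1 ^ 2 * f ∈ dspan := hstep fun i => mem_dspan_iff.2
    ⟨!![0, 0, 0, 1, 0, 0;
        0, 0, 0, 0, 1, 0;
        0, 0, 0, 0, 0, 1;
        0, -X 1, 0, X 0, 0, -1;
        X 0 * X 1, X 0 ^ 2 - X 2, -X 1, -X 1, X 0, 0;
        -X 1 ^ 2, 0, 0, X 2 - X 0 ^ 2, -X 1, 0] i, by
      fin_cases i <;> simp [Fin.sum_univ_six, dcoord, av, a1, a2, a3] <;> grind⟩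
  fin_cases s
  · exact h0 hf
  · exact h1 hf
  · have h := sub_mem (sub_mem (aeval_mul_mem_dspan (X 0) hf) (h0 hf)) (h1 hf)
    rw [aeval_X] at h
    convert h using 1
    simp [av, a1]
    ring

theorem X_sq_pow_mul_mem_dspan (s : Fin 3) (n : ℕ) {f : S3} (hf : f ∈ dspan) :
    (X s ^ 2) ^ n * f ∈ dspan := by
  induction n with
  | zero => simpa
  | succ n ih => rw [pow_succ', mul_assoc]; exact X_sq_mul_mem_dspan s ih

theorem IsSignedShift.coeff_actS {g : G3} {ε : Fin 3 → F3} (h : IsSignedShift g 0 ε) (f : S3)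
    (m : Fin 3 →₀ ℕ) : coeff m (actS g f) = (∏ s, ε s ^ m s) * coeff m f := by
  induction f using MvPolynomial.induction_on' with
  | monomial u a =>
    have hu : actS g (monomial u a) = C (∏ s, ε s ^ u s) * monomial u a := by
      rw [monomial_eq, map_mul, Finsupp.prod_fintype _ _ (by simp), map_prod]
      simp only [map_pow, map_prod, h.actS_X, add_zero, mul_pow, Finset.prod_mul_distrib]
      rw [← algebraMap_eq, AlgHom.commutes]
      ring
    rw [hu, coeff_C_mul, coeff_monomial]
    split_ifs with hum
    · rw [hum]
    · simp
  | add p q hp hq => rw [map_add, coeff_add, coeff_add, hp, hq, mul_add]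

theorem monomial_mem_dspan (m : Fin 3 →₀ ℕ) (a : F3) (h1 : Even (m 1 + m 2))
    (h0 : Odd (m 0 + m 1)) : monomial m a ∈ dspan := by
  have hm : (monomial m a : S3) = aeval av (C a) * (X 0 ^ m 0 * X 1 ^ m 1 * X 2 ^ m 2) := by
    rw [monomial_eq, Finsupp.prod_fintype _ _ (by simp), Fin.prod_univ_three, aeval_C,
      algebraMap_eq]
  rw [hm]
  refine aeval_mul_mem_dspan _ ?_
  have hmem : ∀ i j k l, (X 0 ^ 2) ^ i * ((X 1 ^ 2) ^ j * ((X 2 ^ 2) ^ k * dcoord l 0)) ∈ dspan :=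
    fun i j k l => X_sq_pow_mul_mem_dspan 0 i <| X_sq_pow_mul_mem_dspan 1 j <|
      X_sq_pow_mul_mem_dspan 2 k <| dcoord_mem_dspan l
  rcases Nat.even_or_odd (m 0) with he | ho
  · have hm1 : Odd (m 1) := by grind
    have hm2 : Odd (m 2) := by grind
    obtain ⟨i, hi⟩ := he
    obtain ⟨j, hj⟩ := hm1
    obtain ⟨k, hk⟩ := hm2
    convert hmem i j k 1 using 1
    rw [hi, hj, hk]
    simp only [dcoord, zero_add, Matrix.cons_val]
    ring
  · have hm1 : Even (m 1) := by grind
    have hm2 : Even (m 2) := by grind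
    obtain ⟨i, hi⟩ := ho
    obtain ⟨j, hj⟩ := hm1
    obtain ⟨k, hk⟩ := hm2
    convert hmem i j k 0 using 1
    rw [hi, hj, hk]
    simp only [dcoord, Matrix.cons_val]
    ring

theorem mem_dspan_of_actS {f : S3} (hi : actS im f = f) (hj : actS jm f = -f) : f ∈ dspan := by
  have h0 : ∀ c : F3, c = -c → c = 0 := by decide
  rw [f.as_sum]
  refine sum_mem fun m hm => monomial_mem_dspan m _ ?_ ?_
  · have h := isSignedShift_im.coeff_actS f m
    by_contra hodd
    refine mem_support_iff.1 hm (h0 _ ?_)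
    simpa [hi, Fin.prod_univ_three, ← pow_add, (Nat.not_even_iff_odd.1 hodd).neg_one_pow] using h
  · have h := isSignedShift_jm.coeff_actS f m
    by_contra heven
    refine mem_support_iff.1 hm (h0 _ ?_)
    simpa [hj, Fin.prod_univ_three, ← pow_add, (Nat.not_odd_iff_even.1 heven).neg_one_pow,
      eq_comm] using h

/-- The `G`-invariant `2`-forms form a free `A`-module with basis `{d₁, …, d₆}`: the map
`(p₁,…,p₆) ↦ ∑ᵢ pᵢ(a₁,a₂,a₃)·dᵢ` is injective, with image exactly the set of `G`-fixed
elements of `R` of the form `f₁y₂y₃ + f₂y₃y₁ + f₃y₁y₂`. -/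
theorem stmt11 :
    Function.Injective Phi11 ∧
    Set.range Phi11 = twoForms ∩ {z : Rf | ∀ g : G3, actR g z = z} := by
  refine ⟨fun p q h => ?_, Set.ext fun z => ⟨?_, ?_⟩⟩
  · rw [Phi11_eq_form, Phi11_eq_form, form_injective.eq_iff] at h
    rw [← sub_eq_zero]
    refine linearIndependent_dcoord ?_
    simpa [sub_mul, sub_eq_zero] using congrFun h 0
  · rintro ⟨p, rfl⟩
    exact ⟨⟨_, _, _, (Phi11_eq_form p).trans (form_eq _)⟩, fun g => actR_Phi11 g p⟩
  · rintro ⟨⟨f₁, f₂, f₃, rfl⟩, hz⟩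
    obtain ⟨f, hf⟩ : ∃ f : Fin 3 → S3, f = ![f₁, f₂, f₃] := ⟨_, rfl⟩
    rw [show f₁ ⊗ₜ[F3] (yy 1 * yy 2) + f₂ ⊗ₜ[F3] (yy 2 * yy 0) + f₃ ⊗ₜ[F3] (yy 0 * yy 1) =
      form f by rw [form_eq, hf]; rfl] at hz ⊢
    have ht := (isSignedShift_tm.actR_form_eq_iff f).1 (hz tm)
    have hi := (isSignedShift_im.actR_form_eq_iff f).1 (hz im) 0
    have hj := (isSignedShift_jm.actR_form_eq_iff f).1 (hz jm) 0
    obtain ⟨p, hp⟩ := mem_dspan_iff.1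
      (mem_dspan_of_actS (by simpa using hi) (by simpa using hj))
    have hstep : ∀ s, f s = ∑ i, aeval av (p i) * dcoord i s →
        f (s + 1) = ∑ i, aeval av (p i) * dcoord i (s + 1) := fun s hs => by
      have h := ht s
      rw [Pi.one_apply, one_smul] at h
      rw [← h, hs]
      simp [actS_aeval_av, isSignedShift_tm.actS_dcoord, -aeval_eq_bind₁]
    refine ⟨p, (Phi11_eq_form p).trans (congrArg form (funext fun s => ?_))⟩
    fin_cases s
    · exact hp
    · exact (hstep 0 hp.symm).symm
    · exact (hstep 1 (hstep 0 hp.symm)).symm
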